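/- Let A = [[a,c],[b,d]] be an invertible 2×2 quaternionic matrix. Then either ℱ_A is a regular affine transformation (there exist a₀, b₀ ∈ ℍ, a₀ ≠ 0, with ℱ_A(q) = qa₀ + b₀ for all q ∈ ℍ), or there exist unique a′, b′, p ∈ ℍ such that ℱ_A(q) = (q−p)^{-*} * (qa′+b′) at every q where ℱ_A is defined; the latter is given explicitly by (q² − 2Re(p)q + |p|²)⁻¹ · (q²a′ + q(b′ − conj(p)a′) − conj(p)b′). -/

import Mathlib

open Quaternion Matrix

/-- The real quadratic denominator `|c|²q² + 2Re(c·conj d)q + |d|²` of the regular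
fractional transformation associated to `[[a,c],[b,d]]`. -/
noncomputable def regDenom (c d q : ℍ[ℝ]) : ℍ[ℝ] :=
  ((‖c‖ ^ 2 : ℝ) : ℍ[ℝ]) * q ^ 2 + ((2 * (c * star d).re : ℝ) : ℍ[ℝ]) * q + ((‖d‖ ^ 2 : ℝ) : ℍ[ℝ])

/-- The regular fractional transformation `ℱ_A(q) = (qc+d)^{-*} * (qa+b)` associated to
`A = [[a,c],[b,d]]`, in explicit form. -/
noncomputable def regFT (a c b d q : ℍ[ℝ]) : ℍ[ℝ] :=
  (regDenom c d q)⁻¹ *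
    (q ^ 2 * (star c * a) + q * (star d * a + star c * b) + star d * b)

/-!
Multiplying both rows of the matrix on the left by a common nonzero quaternion `u` does not change
`ℱ_A`: it scales the denominator and the numerator by `|u|²`. If `c = 0` then `d` can be normalized
to `1` and `ℱ_A` becomes affine; if `c ≠ 0` then `c` can be normalized to `1`, which gives the
representation with `a' = c⁻¹a`, `b' = c⁻¹b`, `p = -c⁻¹d`.

For uniqueness, restrict to real `t`. They are central, so there the regular transformation is the
ordinary quotient `(t - p)⁻¹(ta' + b') = a' + (t - p)⁻¹k` with `k = pa' + b'`, and `k ≠ 0` because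
the matrix is invertible. As `t → ∞` the value tends to `a'`, then `t` times the remainder tends to
`k`, and finally `p` is read off from `(t - p)⁻¹k`.
-/

theorem diag_ne_zero_of_isUnit_lowerTriangular {R : Type*} [Semiring R] [Nontrivial R] {a b d : R}
    (hA : IsUnit !![a, 0; b, d]) : a ≠ 0 ∧ d ≠ 0 := by
  constructor
  · rintro rfl
    have : ![1, 0] = (0 : Fin 2 → R) := vecMul_injective_of_isUnit hA (by simp)
    simpa using congrFun this 0
  · rintro rfl
    have : ![0, 1] = (0 : Fin 2 → R) := mulVec_injective_of_isUnit hA (by simp)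
    simpa using congrFun this 1

section DivisionRing

variable {K : Type*} [DivisionRing K]

theorem inv_sub_mul_mul_add {z p : K} (hz : z ≠ p) (a b : K) :
    (z - p)⁻¹ * (z * a + b) = a + (z - p)⁻¹ * (p * a + b) := by
  have split : z * a + b = (z - p) * a + (p * a + b) := by noncomm_ring
  rw [split, mul_add, inv_mul_cancel_left₀ (sub_ne_zero.mpr hz)]

theorem ne_mul_inv_mul_of_isUnit {a b c d : K} (hA : IsUnit !![a, c; b, d]) (hc : c ≠ 0) :
    b ≠ d * c⁻¹ * a := by
  rintro rfl
  have : ![-(d * c⁻¹), 1] = (0 : Fin 2 → K) := vecMul_injective_of_isUnit hA (by simp [hc])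
  simpa using congrFun this 1

end DivisionRing

section NormedDivisionRing

open Bornology Filter Topology

variable {K : Type*} [NormedDivisionRing K]

theorem tendsto_inv_sub_mul_cobounded (p k : K) :
    Tendsto (fun z ↦ (z - p)⁻¹ * k) (cobounded K) (𝓝 0) := by
  simpa using (tendsto_inv₀_cobounded.comp (tendsto_sub_const_cobounded p)).mul_const k

theorem tendsto_inv_sub_mul_mul_add_cobounded (p a b : K) :
    Tendsto (fun z ↦ (z - p)⁻¹ * (z * a + b)) (cobounded K) (𝓝 a) := by
  have lim : Tendsto (fun z ↦ a + (z - p)⁻¹ * (p * a + b)) (cobounded K) (𝓝 a) := by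
    simpa using (tendsto_inv_sub_mul_cobounded p (p * a + b)).const_add a
  refine lim.congr' ?_
  filter_upwards [eventually_ne_cobounded p] with z hz
  exact (inv_sub_mul_mul_add hz a b).symm

theorem tendsto_mul_inv_sub_mul_cobounded (p k : K) :
    Tendsto (fun z ↦ z * ((z - p)⁻¹ * k)) (cobounded K) (𝓝 k) := by
  have lim : Tendsto (fun z ↦ k + p * ((z - p)⁻¹ * k)) (cobounded K) (𝓝 k) := by
    simpa using ((tendsto_inv_sub_mul_cobounded p k).const_mul p).const_add k
  refine lim.congr' ?_
  filter_upwards [eventually_ne_cobounded p] with z hz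
  calc k + p * ((z - p)⁻¹ * k)
      = (z - p) * ((z - p)⁻¹ * k) + p * ((z - p)⁻¹ * k) := by
        rw [mul_inv_cancel_left₀ (sub_ne_zero.mpr hz)]
    _ = z * ((z - p)⁻¹ * k) := by rw [← add_mul, sub_add_cancel]

theorem eq_of_inv_sub_mul_eventuallyEq {l : Filter K} [l.NeBot] (hl : l ≤ cobounded K)
    {p p' k k' : K} (hk : k ≠ 0)
    (h : (fun z ↦ (z - p)⁻¹ * k) =ᶠ[l] fun z ↦ (z - p')⁻¹ * k') : p = p' ∧ k = k' := by
  obtain rfl : k = k' := by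
    have lim := (tendsto_mul_inv_sub_mul_cobounded p k).mono_left hl
    have lim' := (tendsto_mul_inv_sub_mul_cobounded p' k').mono_left hl
    exact tendsto_nhds_unique_of_eventuallyEq lim lim' (h.mono fun z hz ↦ congrArg (z * ·) hz)
  obtain ⟨z, hz⟩ := h.exists
  exact ⟨sub_right_injective (inv_injective (mul_right_cancel₀ hk hz)), rfl⟩

theorem eq_of_inv_sub_mul_mul_add_eventuallyEq {l : Filter K} [l.NeBot] (hl : l ≤ cobounded K)
    {p p' a a' b b' : K} (hk : p * a + b ≠ 0)
    (h : (fun z ↦ (z - p)⁻¹ * (z * a + b)) =ᶠ[l] fun z ↦ (z - p')⁻¹ * (z * a' + b')) :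
    a = a' ∧ b = b' ∧ p = p' := by
  obtain rfl : a = a' :=
    tendsto_nhds_unique_of_eventuallyEq
      ((tendsto_inv_sub_mul_mul_add_cobounded p a b).mono_left hl)
      ((tendsto_inv_sub_mul_mul_add_cobounded p' a' b').mono_left hl) h
  have remainder :
      (fun z ↦ (z - p)⁻¹ * (p * a + b)) =ᶠ[l] fun z ↦ (z - p')⁻¹ * (p' * a + b') := by
    filter_upwards [h, hl (eventually_ne_cobounded p), hl (eventually_ne_cobounded p')]
      with z hz hp hp'
    rwa [inv_sub_mul_mul_add hp, inv_sub_mul_mul_add hp', add_right_inj] at hz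
  obtain ⟨rfl, hb⟩ := eq_of_inv_sub_mul_eventuallyEq hl hk remainder
  exact ⟨rfl, add_left_cancel hb, rfl⟩

end NormedDivisionRing

theorem star_mul_mul_mul_eq_coe_norm_sq_mul (u x y : ℍ[ℝ]) :
    star (u * x) * (u * y) = ((‖u‖ ^ 2 : ℝ) : ℍ[ℝ]) * (star x * y) := by
  calc star (u * x) * (u * y) = star x * (star u * u) * y := by
        simp only [star_mul, mul_assoc]
    _ = ((‖u‖ ^ 2 : ℝ) : ℍ[ℝ]) * (star x * y) := by
        rw [star_mul_self, normSq_eq_norm_mul_self, ← sq, ← coe_commutes, mul_assoc]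

theorem re_mul_comm {R : Type*} [CommRing R] (x y : ℍ[R]) : (x * y).re = (y * x).re := by
  simp only [re_mul, mul_comm]

theorem regDenom_mul_left (u c d q : ℍ[ℝ]) :
    regDenom (u * c) (u * d) q = ((‖u‖ ^ 2 : ℝ) : ℍ[ℝ]) * regDenom c d q := by
  have hre : (u * c * star (u * d)).re = ‖u‖ ^ 2 * (c * star d).re := by
    rw [re_mul_comm, star_mul_mul_mul_eq_coe_norm_sq_mul, coe_mul_eq_smul, re_smul, smul_eq_mul,
      re_mul_comm]
  rw [regDenom, hre, regDenom, norm_mul, norm_mul, mul_pow, mul_pow, mul_left_comm (2 : ℝ)]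
  simp only [coe_mul, mul_add, mul_assoc]

theorem regFT_mul_left {u : ℍ[ℝ]} (hu : u ≠ 0) (a c b d q : ℍ[ℝ]) :
    regFT (u * a) (u * c) (u * b) (u * d) q = regFT a c b d q := by
  have hr : ((‖u‖ ^ 2 : ℝ) : ℍ[ℝ]) ≠ 0 :=
    coe_injective.ne (pow_ne_zero 2 (norm_ne_zero_iff.mpr hu))
  simp only [regFT, regDenom_mul_left, star_mul_mul_mul_eq_coe_norm_sq_mul]
  generalize ‖u‖ ^ 2 = r at hr ⊢
  have numerator : q ^ 2 * (r * (star c * a)) + q * (r * (star d * a) + r * (star c * b))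
        + r * (star d * b)
      = r * (q ^ 2 * (star c * a) + q * (star d * a + star c * b) + star d * b) := by
    simp only [coe_mul_eq_smul, mul_smul_comm, mul_add]
  rw [numerator, _root_.mul_inv_rev, mul_assoc, inv_mul_cancel_left₀ hr]

theorem regFT_eq_regFT_one {c : ℍ[ℝ]} (hc : c ≠ 0) (a b d q : ℍ[ℝ]) :
    regFT a c b d q = regFT (c⁻¹ * a) 1 (c⁻¹ * b) (c⁻¹ * d) q := by
  rw [← regFT_mul_left (inv_ne_zero hc), inv_mul_cancel₀ hc]

theorem regFT_zero_eq_mul_add {d : ℍ[ℝ]} (hd : d ≠ 0) (a b q : ℍ[ℝ]) :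
    regFT a 0 b d q = q * (d⁻¹ * a) + d⁻¹ * b := by
  rw [← regFT_mul_left (inv_ne_zero hd), inv_mul_cancel₀ hd, mul_zero]
  simp [regFT, regDenom]

theorem regFT_one_neg (a b p q : ℍ[ℝ]) :
    regFT a 1 b (-p) q =
      (q ^ 2 - ((2 * p.re : ℝ) : ℍ[ℝ]) * q + ((‖p‖ ^ 2 : ℝ) : ℍ[ℝ]))⁻¹ *
        (q ^ 2 * a + q * (b - star p * a) - star p * b) := by
  simp [regFT, regDenom, sub_eq_add_neg, add_comm]

section RealPoints

open Bornology Filter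

theorem regDenom_coe (c d : ℍ[ℝ]) (t : ℝ) :
    regDenom c d t = star (t * c + d) * (t * c + d) := by
  have hnorm : ‖t * c + d‖ ^ 2 = ‖c‖ ^ 2 * t ^ 2 + 2 * (c * star d).re * t + ‖d‖ ^ 2 := by
    rw [norm_add_sq_real, coe_mul_eq_smul, norm_smul, mul_pow, Real.norm_eq_abs, sq_abs,
      real_inner_smul_left, inner_def]
    ring
  rw [star_mul_self, normSq_eq_norm_mul_self, ← sq, hnorm, regDenom]
  push_cast
  rfl

theorem regFT_coe (a c b d : ℍ[ℝ]) (t : ℝ) :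
    regFT a c b d t = (t * c + d)⁻¹ * (t * a + b) := by
  have numerator : (t : ℍ[ℝ]) ^ 2 * (star c * a) + t * (star d * a + star c * b) + star d * b
      = star (t * c + d) * (t * a + b) := by
    simp only [sq, coe_mul_eq_smul, star_add, Quaternion.star_smul, add_mul, mul_add,
      smul_mul_assoc, mul_smul_comm, smul_add]
    abel
  rw [regFT, regDenom_coe, numerator]
  -- The identity survives `t * c + d = 0` because `0⁻¹ = 0`.
  rcases eq_or_ne (t * c + d) 0 with h | h
  · simp [h]
  · rw [_root_.mul_inv_rev, mul_assoc, inv_mul_cancel_left₀ (star_ne_zero.mpr h)]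

theorem tendsto_quaternion_coe_cobounded :
    Tendsto ((↑) : ℝ → ℍ[ℝ]) (cobounded ℝ) (cobounded ℍ[ℝ]) :=
  tendsto_algebraMap_cobounded ℝ ℍ[ℝ]

theorem eventually_regDenom_coe_ne_zero {c : ℍ[ℝ]} (hc : c ≠ 0) (d : ℍ[ℝ]) :
    ∀ᶠ t : ℝ in cobounded ℝ, regDenom c d t ≠ 0 := by
  filter_upwards [tendsto_quaternion_coe_cobounded.eventually_ne_cobounded (-d * c⁻¹)] with t ht h
  rw [regDenom_coe, mul_eq_zero, star_eq_zero, or_self] at h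
  exact ht ((eq_mul_inv_iff_mul_eq₀ hc).mpr (eq_neg_of_add_eq_zero_left h))

theorem existsUnique_regFT_eq_regFT_one_neg {a c b d : ℍ[ℝ]} (hc : c ≠ 0)
    (hb : b ≠ d * c⁻¹ * a) :
    ∃! x : ℍ[ℝ] × ℍ[ℝ] × ℍ[ℝ],
      ∀ q, regDenom c d q ≠ 0 → regFT a c b d q = regFT x.1 1 x.2.1 (-x.2.2) q := by
  have hk : -(c⁻¹ * d) * (c⁻¹ * a) + c⁻¹ * b ≠ 0 := by
    have factor : -(c⁻¹ * d) * (c⁻¹ * a) + c⁻¹ * b = c⁻¹ * (b - d * c⁻¹ * a) := by noncomm_ring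
    rw [factor]
    exact mul_ne_zero (inv_ne_zero hc) (sub_ne_zero.mpr hb)
  refine ⟨(c⁻¹ * a, c⁻¹ * b, -(c⁻¹ * d)), fun q _ ↦ ?_, ?_⟩
  · rw [regFT_eq_regFT_one hc, neg_neg]
  · rintro ⟨a', b', p⟩ hx
    have agree : ∀ᶠ t : ℝ in cobounded ℝ,
        ((t : ℍ[ℝ]) - -(c⁻¹ * d))⁻¹ * (t * (c⁻¹ * a) + c⁻¹ * b) = (t - p)⁻¹ * (t * a' + b') := by
      filter_upwards [eventually_regDenom_coe_ne_zero hc d] with t ht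
      simpa [regFT_eq_regFT_one hc, regFT_coe, sub_eq_add_neg] using hx t ht
    obtain ⟨rfl, rfl, rfl⟩ :=
      eq_of_inv_sub_mul_mul_add_eventuallyEq tendsto_quaternion_coe_cobounded hk
        (eventually_map.mpr agree)
    rfl

end RealPoints

/-- Every regular fractional transformation is either a regular affine transformation, or of
the form `(q−p)^{-*} * (qa'+b')` for unique `a', b', p ∈ ℍ` (here `x = (a', b', p)`). -/
theorem regular_fractional_representation (a c b d : ℍ[ℝ]) (hA : IsUnit !![a, c; b, d]) :
    (∃ a₀ b₀ : ℍ[ℝ], a₀ ≠ 0 ∧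
        ∀ q : ℍ[ℝ], regDenom c d q ≠ 0 → regFT a c b d q = q * a₀ + b₀) ∨
      (∃! x : ℍ[ℝ] × ℍ[ℝ] × ℍ[ℝ],
        ∀ q : ℍ[ℝ], regDenom c d q ≠ 0 →
          regFT a c b d q =
            (q ^ 2 - ((2 * x.2.2.re : ℝ) : ℍ[ℝ]) * q + ((‖x.2.2‖ ^ 2 : ℝ) : ℍ[ℝ]))⁻¹ *
              (q ^ 2 * x.1 + q * (x.2.1 - star x.2.2 * x.1) - star x.2.2 * x.2.1)) := by
  rcases eq_or_ne c 0 with rfl | hc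
  · left
    obtain ⟨ha, hd⟩ := diag_ne_zero_of_isUnit_lowerTriangular hA
    exact ⟨d⁻¹ * a, d⁻¹ * b, mul_ne_zero (inv_ne_zero hd) ha,
      fun q _ ↦ regFT_zero_eq_mul_add hd a b q⟩
  · right
    simp only [← regFT_one_neg]
    exact existsUnique_regFT_eq_regFT_one_neg hc (ne_mul_inv_mul_of_isUnit hA hc)
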